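/- Let Z : Ω → ℝ^{d_z} be a measurable random variable on a probability space (Ω, P), let D_x be a set, and let l, f, u : D_x × ℝ^{d_z} → ℝ be such that for every x ∈ D_x the maps z ↦ l(x,z), z ↦ f(x,z), z ↦ u(x,z) are Borel measurable and l(x,z) ≤ f(x,z) ≤ u(x,z) for all x ∈ D_x, z ∈ ℝ^{d_z}. Fix α ∈ (0,1), let x* ∈ D_x be any point (in particular a maximizer of x ↦ VaR_α(f(x,Z))), and let x_t ∈ D_x satisfy VaR_α(u(x, Z)) ≤ VaR_α(u(x_t, Z)) for all x ∈ D_x (i.e., x_t maximizes the upper confidence bound of VaR). Then the instantaneous regret is bounded by the width of the VaR confidence interval at x_t: VaR_α(f(x*, Z)) − VaR_α(f(x_t, Z)) ≤ VaR_α(u(x_t, Z)) − VaR_α(l(x_t, Z)). -/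

import Mathlib

open MeasureTheory Set

/-- Value-at-risk of a real random variable `X` at level `α`. -/
noncomputable def VaR {Ω : Type*} [MeasurableSpace Ω] (P : Measure Ω)
    (X : Ω → ℝ) (α : ℝ) : ℝ :=
  sInf {w : ℝ | ENNReal.ofReal α ≤ P {ω | X ω ≤ w}}

theorem VaR_nonempty_aux {Ω : Type*} [MeasurableSpace Ω] (P : Measure Ω)
    [IsProbabilityMeasure P] (X : Ω → ℝ) (hX : Measurable X) (α : ℝ) (h1 : α < 1) :
    {w : ℝ | ENNReal.ofReal α ≤ P {ω | X ω ≤ w}}.Nonempty := by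
  have := Measure.isProbabilityMeasure_map (μ := P) hX.aemeasurable
  have h := tendsto_measure_Iic_atTop (P.map X)
  rw [measure_univ] at h
  have h2 : ENNReal.ofReal α < 1 := by simpa using h1
  obtain ⟨w, hw⟩ := (h.eventually (lt_mem_nhds h2)).exists
  rw [Measure.map_apply hX measurableSet_Iic] at hw
  exact ⟨w, hw.le⟩

theorem VaR_bddBelow_aux {Ω : Type*} [MeasurableSpace Ω] (P : Measure Ω)
    [IsProbabilityMeasure P] (X : Ω → ℝ) (hX : Measurable X) (α : ℝ) (h0 : 0 < α) :
    BddBelow {w : ℝ | ENNReal.ofReal α ≤ P {ω | X ω ≤ w}} := by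
  have := Measure.isProbabilityMeasure_map (μ := P) hX.aemeasurable
  have h := ENNReal.tendsto_ofReal (ProbabilityTheory.tendsto_cdf_atBot (P.map X))
  simp only [ProbabilityTheory.ofReal_cdf, ENNReal.ofReal_zero] at h
  have h2 : 0 < ENNReal.ofReal α := by simpa using h0
  obtain ⟨w, hw⟩ := (h.eventually (gt_mem_nhds h2)).exists
  rw [Measure.map_apply hX measurableSet_Iic] at hw
  refine ⟨w, fun v hv => ?_⟩
  by_contra hc
  push Not at hc
  have h3 : P {ω | X ω ≤ v} ≤ P (X ⁻¹' Iic w) :=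
    measure_mono fun ω hω => le_trans hω hc.le
  exact absurd (lt_of_le_of_lt (le_trans hv h3) hw) (lt_irrefl _)

theorem VaR_mono_aux {Ω : Type*} [MeasurableSpace Ω] (P : Measure Ω)
    [IsProbabilityMeasure P] (X Y : Ω → ℝ) (hX : Measurable X) (hY : Measurable Y)
    (hXY : ∀ ω, X ω ≤ Y ω) (α : ℝ) (hα : α ∈ Set.Ioo (0 : ℝ) 1) :
    VaR P X α ≤ VaR P Y α := by
  refine csInf_le_csInf (VaR_bddBelow_aux P X hX α hα.1) (VaR_nonempty_aux P Y hY α hα.2) ?_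
  intro w hw
  exact le_trans hw (measure_mono fun ω hω => le_trans (hXY ω) hω)

theorem stmt8 {Ω : Type*} [MeasurableSpace Ω] (P : Measure Ω)
    [IsProbabilityMeasure P] {dz : ℕ} (Z : Ω → (Fin dz → ℝ)) (hZ : Measurable Z)
    {Dx : Type*} (l f u : Dx → (Fin dz → ℝ) → ℝ)
    (hl : ∀ x : Dx, Measurable (l x)) (hf : ∀ x : Dx, Measurable (f x))
    (hu : ∀ x : Dx, Measurable (u x))
    (hlf : ∀ (x : Dx) (z : Fin dz → ℝ), l x z ≤ f x z)
    (hfu : ∀ (x : Dx) (z : Fin dz → ℝ), f x z ≤ u x z)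
    (α : ℝ) (hα : α ∈ Set.Ioo (0 : ℝ) 1)
    (xstar xt : Dx)
    (hxt : ∀ x : Dx, VaR P (fun ω => u x (Z ω)) α ≤ VaR P (fun ω => u xt (Z ω)) α) :
    VaR P (fun ω => f xstar (Z ω)) α - VaR P (fun ω => f xt (Z ω)) α ≤
      VaR P (fun ω => u xt (Z ω)) α - VaR P (fun ω => l xt (Z ω)) α := by
  have h1 := VaR_mono_aux P (fun ω => f xstar (Z ω)) (fun ω => u xstar (Z ω))
    ((hf _).comp hZ) ((hu _).comp hZ) (fun ω => hfu _ _) α hα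
  have h2 := VaR_mono_aux P (fun ω => l xt (Z ω)) (fun ω => f xt (Z ω))
    ((hl _).comp hZ) ((hf _).comp hZ) (fun ω => hlf _ _) α hα
  have h3 := hxt xstar
  linarith
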